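/- arXiv:1303.6684 — 2 statements merged into one kernel-verified Lean document; each statement's English description precedes it below -/
import Mathlib

section
/- For α, β, ν_0, γ, σ > 0, real a, and x > 0: ∫_0^x (x−t)^{β−1} E_{α,β}^γ(a(x−t)^α) · t^{ν_0−1} E_{α,ν_0}^σ(a t^α) dt = x^{β+ν_0−1} E_{α,β+ν_0}^{γ+σ}(a x^α). -/
open Real MeasureTheory intervalIntegral

noncomputable def ML1 (ν z : ℝ) : ℝ := ∑' n : ℕ, z ^ n / Real.Gamma (ν * n + 1)

noncomputable def ML2 (β γ z : ℝ) : ℝ := ∑' r : ℕ, z ^ r / Real.Gamma (β * r + γ)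

noncomputable def poch (ξ : ℝ) (r : ℕ) : ℝ := ∏ i ∈ Finset.range r, (ξ + i)

noncomputable def ML3 (β γ ξ z : ℝ) : ℝ :=
  ∑' r : ℕ, poch ξ r * z ^ r / (r.factorial * Real.Gamma (β * r + γ))


lemma cc_succ (ξ : ℝ) (n : ℕ) :
    ((n : ℝ) + 1) * (poch ξ (n+1) / (n+1).factorial) = (ξ + n) * (poch ξ n / n.factorial) := by
  have h : ((n.factorial : ℕ) : ℝ) ≠ 0 := by positivity
  have h2 : (n : ℝ) + 1 ≠ 0 := by positivity
  rw [poch, Finset.prod_range_succ, Nat.factorial_succ, poch]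
  push_cast
  field_simp

lemma cc_pos {ξ : ℝ} (h : 0 < ξ) (n : ℕ) : 0 < poch ξ n / n.factorial := by
  have : 0 < poch ξ n := Finset.prod_pos fun i _ => by positivity
  positivity

lemma cc_le {ξ : ℝ} (h : 0 < ξ) (n : ℕ) : poch ξ n / n.factorial ≤ (max ξ 1) ^ n := by
  induction n with
  | zero => simp [poch]
  | succ n ih =>
    have h1 := cc_succ ξ n
    have h2 : (0 : ℝ) < (n : ℝ) + 1 := by positivity
    have h3 : ξ + n ≤ (max ξ 1) * (n + 1) := by
      have := le_max_left ξ 1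
      have := le_max_right ξ 1
      nlinarith [Nat.cast_nonneg (α := ℝ) n]
    have h4 := cc_pos h n
    have : ((n : ℝ) + 1) * (poch ξ (n+1) / (n+1).factorial) ≤ ((n : ℝ) + 1) * (max ξ 1) ^ (n+1) := by
      rw [h1, pow_succ]
      calc (ξ + n) * (poch ξ n / n.factorial) ≤ ((max ξ 1) * (n + 1)) * (max ξ 1) ^ n := by
            gcongr
        _ = _ := by ring
    exact le_of_mul_le_mul_left this h2

lemma cc_vander (γ σ : ℝ) (k : ℕ) :
    ∑ p ∈ Finset.HasAntidiagonal.antidiagonal k, (poch γ p.1 / p.1.factorial) * (poch σ p.2 / p.2.factorial)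
      = poch (γ + σ) k / k.factorial := by
  induction k with
  | zero => simp [poch]
  | succ k ih =>
    have h2 : (0 : ℝ) < (k : ℝ) + 1 := by positivity
    apply mul_left_cancel₀ h2.ne'
    rw [cc_succ, ← ih, Finset.mul_sum, Finset.mul_sum]
    have e : ∀ p ∈ Finset.HasAntidiagonal.antidiagonal (k+1),
        ((k : ℝ) + 1) * ((poch γ p.1 / p.1.factorial) * (poch σ p.2 / p.2.factorial)) =
        ((p.1 : ℝ) * (poch γ p.1 / p.1.factorial)) * (poch σ p.2 / p.2.factorial) +
        (poch γ p.1 / p.1.factorial) * ((p.2 : ℝ) * (poch σ p.2 / p.2.factorial)) := by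
      intro p hp
      have : (p.1 : ℝ) + p.2 = k + 1 := by exact_mod_cast Finset.HasAntidiagonal.mem_antidiagonal.1 hp
      rw [← this]; ring
    rw [Finset.sum_congr rfl e, Finset.sum_add_distrib, Finset.Nat.sum_antidiagonal_succ]
    rw [Finset.Nat.sum_antidiagonal_succ' (f := fun p : ℕ × ℕ => (poch γ p.1 / p.1.factorial) * ((p.2 : ℝ) * (poch σ p.2 / p.2.factorial)))]
    push_cast
    simp only [cc_succ, zero_mul, mul_zero, zero_add]
    rw [← Finset.sum_add_distrib]
    refine Finset.sum_congr rfl fun p hp => ?_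
    have : (p.1 : ℝ) + p.2 = k := by exact_mod_cast Finset.HasAntidiagonal.mem_antidiagonal.1 hp
    rw [← this]; ring

lemma Gamma_lower {s M : ℝ} (hs : 1 ≤ s) (hM : 0 < M) :
    M ^ (s - 1) * exp (-M) ≤ Real.Gamma s := by
  have hs0 : 0 < s := by linarith
  have hc := Real.GammaIntegral_convergent hs0
  have hsub : Set.Ioi M ⊆ Set.Ioi (0 : ℝ) := Set.Ioi_subset_Ioi hM.le
  rw [Real.Gamma_eq_integral hs0, ← integral_exp_neg_Ioi, ← MeasureTheory.integral_const_mul]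
  calc ∫ t in Set.Ioi M, M ^ (s-1) * exp (-t) ≤ ∫ t in Set.Ioi M, exp (-t) * t ^ (s-1) := by
        refine setIntegral_mono_on ?_ (hc.mono_set hsub) measurableSet_Ioi ?_
        · exact (integrableOn_exp_neg_Ioi M).const_mul _
        · intro t ht
          rw [mul_comm]
          have : M < t := ht
          have : M ^ (s-1) ≤ t ^ (s-1) := Real.rpow_le_rpow hM.le this.le (by linarith)
          gcongr
    _ ≤ _ := by
        refine setIntegral_mono_set hc ?_ hsub.eventuallyLE
        refine (ae_restrict_iff' measurableSet_Ioi).2 (Filter.Eventually.of_forall fun t ht => ?_)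
        have : (0:ℝ) < t := ht
        simp only [Pi.zero_apply]
        positivity

lemma summ_gamma {α β w : ℝ} (hα : 0 < α) (hβ : 0 < β) (hw : 0 ≤ w) :
    Summable fun r : ℕ => w ^ r / Real.Gamma (α * r + β) := by
  set M : ℝ := (2 * w + 1) ^ (1 / α) with hMd
  have hM : 0 < M := by positivity
  have hMα : M ^ α = 2 * w + 1 := by
    rw [hMd, ← Real.rpow_mul (by positivity)]; field_simp; simp
  have hq : Summable fun r : ℕ => (w / (2 * w + 1)) ^ r * (M ^ (β - 1) * exp (-M))⁻¹ := by
    refine Summable.mul_right _ (summable_geometric_of_lt_one (by positivity) ?_)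
    rw [div_lt_one (by positivity)]; linarith
  refine hq.of_norm_bounded_eventually_nat ?_
  obtain ⟨N, hN⟩ := exists_nat_gt (1 / α)
  filter_upwards [Filter.eventually_ge_atTop N] with r hr
  have h1 : 1 ≤ α * r + β := by
    have : 1 / α < r := hN.trans_le (by exact_mod_cast hr)
    rw [div_lt_iff₀ hα] at this
    nlinarith
  have hG := Gamma_lower h1 hM
  have e : M ^ (α * r + β - 1) = (2 * w + 1) ^ r * M ^ (β - 1) := by
    rw [show α * r + β - 1 = α * r + (β - 1) by ring, Real.rpow_add hM, Real.rpow_mul hM.le, hMα,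
      Real.rpow_natCast]
  rw [e] at hG
  have hp : 0 < M ^ (β - 1) := by positivity
  have hG0 : 0 < Real.Gamma (α * r + β) := Real.Gamma_pos_of_pos (by linarith)
  rw [Real.norm_of_nonneg (by positivity), div_pow]
  calc _ ≤ w ^ r / ((2 * w + 1) ^ r * M ^ (β - 1) * exp (-M)) := by gcongr
    _ = _ := by field_simp

lemma summ_ml {α β ξ : ℝ} (z : ℝ) (hα : 0 < α) (hβ : 0 < β) (hξ : 0 < ξ) :
    Summable fun r : ℕ => (poch ξ r / r.factorial) * (|z| ^ r / Real.Gamma (α * r + β)) := by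
  refine (summ_gamma hα hβ (w := max ξ 1 * |z|) (by positivity)).of_nonneg_of_le ?_ ?_
  · intro r
    have := cc_pos hξ r
    have := Real.Gamma_pos_of_pos (show 0 < α * r + β by positivity)
    positivity
  · intro r
    have := cc_le hξ r
    have := Real.Gamma_pos_of_pos (show 0 < α * r + β by positivity)
    rw [mul_pow, mul_div_assoc]
    gcongr

lemma dbl_abs {γ σ : ℝ} (hγ : 0 < γ) (hσ : 0 < σ) (g : ℕ → ℝ)
    (h : Summable fun k : ℕ => (poch (γ + σ) k / k.factorial) * |g k|) :
    Summable fun p : ℕ × ℕ => (poch γ p.1 / p.1.factorial) * (poch σ p.2 / p.2.factorial) *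
      |g (p.1 + p.2)| := by
  rw [← Finset.HasAntidiagonal.sigmaAntidiagonalEquivProd.summable_iff, summable_sigma_of_nonneg]
  · refine ⟨fun k => Summable.of_finite, ?_⟩
    refine h.congr fun k => ?_
    rw [tsum_fintype, ← cc_vander, Finset.sum_mul, ← Finset.sum_coe_sort]
    refine Finset.sum_congr rfl fun p _ => ?_
    have := Finset.HasAntidiagonal.mem_antidiagonal.1 p.2
    simp [this]
  · intro p
    have := cc_pos hγ p.2.1.1
    have := cc_pos hσ p.2.1.2
    simp only [Function.comp, Finset.HasAntidiagonal.sigmaAntidiagonalEquivProd_apply]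
    positivity

lemma dbl_tsum {γ σ : ℝ} (hγ : 0 < γ) (hσ : 0 < σ) (g : ℕ → ℝ)
    (h : Summable fun k : ℕ => (poch (γ + σ) k / k.factorial) * |g k|) :
    ∑' p : ℕ × ℕ, (poch γ p.1 / p.1.factorial) * (poch σ p.2 / p.2.factorial) * g (p.1 + p.2)
     = ∑' k : ℕ, (poch (γ + σ) k / k.factorial) * g k := by
  have hs : Summable fun p : ℕ × ℕ => (poch γ p.1 / p.1.factorial) * (poch σ p.2 / p.2.factorial) *
      g (p.1 + p.2) := by
    refine Summable.of_norm ((dbl_abs hγ hσ g h).congr fun p => ?_)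
    rw [norm_mul, norm_mul, Real.norm_of_nonneg (cc_pos hγ _).le, Real.norm_of_nonneg (cc_pos hσ _).le,
      Real.norm_eq_abs]
  rw [← Finset.HasAntidiagonal.sigmaAntidiagonalEquivProd.tsum_eq]
  have hs2 := Finset.HasAntidiagonal.sigmaAntidiagonalEquivProd.summable_iff.2 hs
  simp only [Function.comp_def] at hs2
  rw [Summable.tsum_sigma' (fun k => Summable.of_finite) hs2]
  refine tsum_congr fun k => ?_
  rw [tsum_fintype, ← cc_vander, Finset.sum_mul, ← Finset.sum_coe_sort (Finset.HasAntidiagonal.antidiagonal k)]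
  refine Finset.sum_congr rfl fun p _ => ?_
  have := Finset.HasAntidiagonal.mem_antidiagonal.1 p.2
  simp [this]

lemma beta_int {u v x : ℝ} (hu : 0 < u) (hv : 0 < v) (hx : 0 < x) :
    ∫ t in (0:ℝ)..x, (x - t) ^ (u - 1) * t ^ (v - 1) =
      x ^ (u + v - 1) * (Real.Gamma u * Real.Gamma v / Real.Gamma (u + v)) := by
  have h := Complex.betaIntegral_scaled (v : ℂ) (u : ℂ) hx
  rw [Complex.betaIntegral_eq_Gamma_mul_div _ _ (by simpa) (by simpa)] at h
  have e : ∫ t in (0:ℝ)..x, (t : ℂ) ^ ((v : ℂ) - 1) * ((x : ℂ) - t) ^ ((u : ℂ) - 1) =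
      ∫ t in (0:ℝ)..x, (((x - t) ^ (u - 1) * t ^ (v - 1) : ℝ) : ℂ) := by
    refine intervalIntegral.integral_congr fun t ht => ?_
    rw [Set.uIcc_of_le hx.le] at ht
    rw [Complex.ofReal_mul, Complex.ofReal_cpow (by linarith [ht.2]), Complex.ofReal_cpow ht.1]
    push_cast
    ring
  rw [e, intervalIntegral.integral_ofReal, ← Complex.ofReal_add, Complex.Gamma_ofReal, Complex.Gamma_ofReal, Complex.Gamma_ofReal, show ((v + u : ℝ) : ℂ) - 1 = ((v + u - 1 : ℝ) : ℂ) by push_cast; ring, ← Complex.ofReal_cpow hx.le] at h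
  rw [add_comm u v, mul_comm (Real.Gamma u)]
  exact_mod_cast h

lemma beta_intble {u v x : ℝ} (hu : 0 < u) (hv : 0 < v) (hx : 0 < x) :
    IntervalIntegrable (fun t => (x - t) ^ (u - 1) * t ^ (v - 1)) volume 0 x := by
  by_contra h
  have h1 := beta_int hu hv hx
  rw [intervalIntegral.integral_undef h] at h1
  have := Real.Gamma_pos_of_pos hu
  have := Real.Gamma_pos_of_pos hv
  have := Real.Gamma_pos_of_pos (add_pos hu hv)
  have : 0 < x ^ (u + v - 1) * (Real.Gamma u * Real.Gamma v / Real.Gamma (u + v)) := by positivity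
  linarith

lemma ml3_eq (β γ ξ z : ℝ) : ML3 β γ ξ z =
    ∑' r : ℕ, (poch ξ r / r.factorial) * (z ^ r / Real.Gamma (β * r + γ)) := by
  unfold ML3
  exact tsum_congr fun r => by rw [div_mul_div_comm]

theorem stmt6 (α β ν₀ γ σ a x : ℝ) (hα : 0 < α) (hβ : 0 < β) (hν : 0 < ν₀)
    (hγ : 0 < γ) (hσ : 0 < σ) (hx : 0 < x) :
    ∫ t in (0 : ℝ)..x,
        (x - t) ^ (β - 1) * ML3 α β γ (a * (x - t) ^ α) *
          (t ^ (ν₀ - 1) * ML3 α ν₀ σ (a * t ^ α)) =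
      x ^ (β + ν₀ - 1) * ML3 α (β + ν₀) (γ + σ) (a * x ^ α) := by
  have hu : ∀ m : ℕ, 0 < α * m + β := fun m => by positivity
  have hv : ∀ m : ℕ, 0 < α * m + ν₀ := fun m => by positivity
  have hGu := fun m => Real.Gamma_pos_of_pos (hu m)
  have hGv := fun m => Real.Gamma_pos_of_pos (hv m)
  set K : ℝ → ℕ × ℕ → ℝ := fun b p => (poch γ p.1 / p.1.factorial) * (poch σ p.2 / p.2.factorial) *
    (b ^ (p.1 + p.2) / (Real.Gamma (α * p.1 + β) * Real.Gamma (α * p.2 + ν₀))) with hK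
  set B : ℕ × ℕ → ℝ → ℝ := fun p t => (x - t) ^ (α * p.1 + β - 1) * t ^ (α * p.2 + ν₀ - 1) with hB
  set g : ℝ → ℕ → ℝ := fun b k =>
    x ^ (β + ν₀ - 1) * ((b * x ^ α) ^ k / Real.Gamma (α * k + (β + ν₀))) with hg
  have hBi : ∀ p, Integrable (B p) (volume.restrict (Set.Ioc 0 x)) := fun p =>
    (intervalIntegrable_iff_integrableOn_Ioc_of_le hx.le).1 (beta_intble (hu p.1) (hv p.2) hx)
  have hKB : ∀ b p, ∫ t in Set.Ioc 0 x, K b p * B p t =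
      (poch γ p.1 / p.1.factorial) * (poch σ p.2 / p.2.factorial) * g b (p.1 + p.2) := by
    intro b p
    rw [MeasureTheory.integral_const_mul, ← intervalIntegral.integral_of_le hx.le, beta_int (hu p.1) (hv p.2) hx]
    simp only [hK, hg]
    have h1 := (hGu p.1).ne'
    have h2 := (hGv p.2).ne'
    rw [show α * p.1 + β + (α * p.2 + ν₀) - 1 = α * ((p.1 + p.2 : ℕ) : ℝ) + (β + ν₀ - 1) by push_cast; ring,
      show α * p.1 + β + (α * p.2 + ν₀) = α * ((p.1 + p.2 : ℕ) : ℝ) + (β + ν₀) by push_cast; ring,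
      Real.rpow_add hx, Real.rpow_mul hx.le, Real.rpow_natCast, mul_pow]
    field_simp
  have hgs : ∀ b, Summable fun k : ℕ => (poch (γ + σ) k / k.factorial) * |g b k| := by
    intro b
    refine ((summ_ml (b * x ^ α) hα (add_pos hβ hν) (add_pos hγ hσ)).mul_left
      (x ^ (β + ν₀ - 1))).congr fun k => ?_
    simp only [hg]
    rw [abs_mul (x ^ (β + ν₀ - 1)), abs_div, abs_pow, abs_of_pos (Real.Gamma_pos_of_pos (show 0 < α * k + (β + ν₀) by positivity)),
      abs_of_pos (Real.rpow_pos_of_pos hx _)]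
    ring
  have hmain := integral_tsum_of_summable_integral_norm (μ := volume.restrict (Set.Ioc 0 x))
    (F := fun p t => K a p * B p t) (fun p => (hBi p).const_mul _) (by
      refine (dbl_abs hγ hσ (g |a|) (hgs |a|)).congr fun p => ?_
      have e : ∫ t in Set.Ioc 0 x, ‖K a p * B p t‖ = ∫ t in Set.Ioc 0 x, K |a| p * B p t := by
        refine setIntegral_congr_fun measurableSet_Ioc fun t ht => ?_
        have h0 : 0 ≤ B p t := by
          have := ht.1
          have : 0 ≤ x - t := by linarith [ht.2]
          simp only [hB]
          positivity
        simp only [norm_mul, Real.norm_of_nonneg h0, hK]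
        rw [Real.norm_of_nonneg (cc_pos hγ _).le, Real.norm_of_nonneg (cc_pos hσ _).le, norm_div,
          norm_mul, Real.norm_of_nonneg (hGu _).le, Real.norm_of_nonneg (hGv _).le, norm_pow,
          Real.norm_eq_abs]
      rw [e, hKB]
      congr 1
      refine abs_of_nonneg ?_
      have := Real.Gamma_pos_of_pos (show 0 < α * ((p.1 + p.2 : ℕ) : ℝ) + (β + ν₀) by positivity)
      simp only [hg]
      positivity)
  simp only [hKB] at hmain
  rw [dbl_tsum hγ hσ (g a) (hgs a)] at hmain
  rw [ml3_eq, ← tsum_mul_left, intervalIntegral.integral_of_le hx.le]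
  trans ∑' k : ℕ, (poch (γ + σ) k / k.factorial) * g a k
  swap
  · exact tsum_congr fun k => by simp only [hg]; ring
  rw [hmain]
  rw [integral_Ioc_eq_integral_Ioo, integral_Ioc_eq_integral_Ioo]
  refine setIntegral_congr_fun measurableSet_Ioo fun t ht => ?_
  have ht0 : 0 < t := ht.1
  have hxt : 0 < x - t := by linarith [ht.2]
  have key : ∀ {y δ ξ : ℝ}, 0 < δ → 0 < ξ → Summable fun r : ℕ =>
      ‖(poch ξ r / r.factorial) * ((a * y ^ α) ^ r / Real.Gamma (α * r + δ))‖ := by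
    intro y δ ξ hδ hξ
    refine (summ_ml (a * y ^ α) hα hδ hξ).congr fun r => ?_
    rw [norm_mul, norm_div _ (Real.Gamma _), norm_pow, Real.norm_of_nonneg (cc_pos hξ r).le,
      Real.norm_of_nonneg (Real.Gamma_pos_of_pos (show 0 < α * r + δ by positivity)).le,
      Real.norm_eq_abs]
  rw [mul_mul_mul_comm, ml3_eq, ml3_eq, tsum_mul_tsum_of_summable_norm (key hβ hγ) (key hν hσ),
    ← tsum_mul_left]
  refine tsum_congr fun p => ?_
  simp only [hK, hB]
  rw [show α * p.1 + β - 1 = α * p.1 + (β - 1) by ring,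
    show α * p.2 + ν₀ - 1 = α * p.2 + (ν₀ - 1) by ring,
    Real.rpow_add hxt, Real.rpow_add ht0, Real.rpow_mul hxt.le, Real.rpow_mul ht0.le,
    Real.rpow_natCast, Real.rpow_natCast, mul_pow, mul_pow, pow_add]
  field_simp
end

section
/- The state probabilities p_k(t) = λ^{δk} t^{νδk} E_{ν,νδk+1}^{δk}(−λ t^ν) − λ^{δ(k+1)} t^{νδ(k+1)} E_{ν,νδ(k+1)+1}^{δ(k+1)}(−λ t^ν) satisfy, for every integer k ≥ 1 and t > 0, the convolution identity p_k(t) = λ^δ ∫_0^t (t−w)^{νδ−1} E_{ν,νδ}^δ(−λ(t−w)^ν) p_{k−1}(w) dw, where λ > 0, ν ∈ (0,1], δ > 0. -/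
open Real MeasureTheory intervalIntegral

noncomputable def pstate (lam ν δ : ℝ) (k : ℕ) (t : ℝ) : ℝ :=
  lam ^ (δ * k) * t ^ (ν * δ * k) * ML3 ν (ν * δ * k + 1) (δ * k) (-(lam * t ^ ν)) -
    lam ^ (δ * (k + 1)) * t ^ (ν * δ * (k + 1)) *
      ML3 ν (ν * δ * (k + 1) + 1) (δ * (k + 1)) (-(lam * t ^ ν))

lemma poch_succ (ξ : ℝ) (r : ℕ) : poch ξ (r+1) = poch ξ r * (ξ + r) := by
  simp [poch, Finset.prod_range_succ]

lemma poch_nonneg {ξ : ℝ} (h : 0 ≤ ξ) (r : ℕ) : 0 ≤ poch ξ r :=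
  Finset.prod_nonneg fun i _ => by positivity

noncomputable def pu (ξ : ℝ) (r : ℕ) : ℝ := poch ξ r / r.factorial

lemma pu_nonneg {ξ : ℝ} (h : 0 ≤ ξ) (r : ℕ) : 0 ≤ pu ξ r :=
  div_nonneg (poch_nonneg h r) (by positivity)

lemma pu_zero (ξ : ℝ) : pu ξ 0 = 1 := by simp [pu, poch]

lemma pu_succ (ξ : ℝ) (r : ℕ) : ((r:ℝ)+1) * pu ξ (r+1) = (ξ + r) * pu ξ r := by
  unfold pu
  rw [poch_succ, Nat.factorial_succ]
  have : (r.factorial : ℝ) ≠ 0 := by positivity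
  have : (r : ℝ) + 1 ≠ 0 := by positivity
  push_cast
  field_simp

lemma pu_vandermonde (ξ η : ℝ) (n : ℕ) :
    ∑ p ∈ Finset.HasAntidiagonal.antidiagonal n, pu ξ p.1 * pu η p.2 = pu (ξ + η) n := by
  induction n with
  | zero => simp [pu_zero]
  | succ n ih =>
    have hn : ((n:ℝ)+1) ≠ 0 := by positivity
    apply mul_left_cancel₀ hn
    rw [pu_succ, ← ih]
    have h1 : ((n:ℝ)+1) * ∑ p ∈ Finset.HasAntidiagonal.antidiagonal (n+1), pu ξ p.1 * pu η p.2
        = ∑ p ∈ Finset.HasAntidiagonal.antidiagonal (n+1), (p.1:ℝ) * pu ξ p.1 * pu η p.2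
          + ∑ p ∈ Finset.HasAntidiagonal.antidiagonal (n+1), pu ξ p.1 * ((p.2:ℝ) * pu η p.2) := by
      rw [Finset.mul_sum, ← Finset.sum_add_distrib]
      refine Finset.sum_congr rfl fun p hp => ?_
      have : (p.1:ℝ) + p.2 = n + 1 := by exact_mod_cast Finset.HasAntidiagonal.mem_antidiagonal.1 hp
      rw [← this]; ring
    rw [h1, Finset.Nat.sum_antidiagonal_succ]
    rw [Finset.Nat.sum_antidiagonal_succ' (f := fun p : ℕ × ℕ => pu ξ p.1 * ((p.2:ℝ) * pu η p.2))]
    simp only [Nat.cast_zero, zero_mul, mul_zero, add_zero, zero_add, Nat.cast_add, Nat.cast_one, pu_succ]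
    rw [← Finset.sum_add_distrib, Finset.mul_sum]
    refine Finset.sum_congr rfl fun p hp => ?_
    have : (p.1:ℝ) + p.2 = n := by exact_mod_cast Finset.HasAntidiagonal.mem_antidiagonal.1 hp
    rw [← this]; ring

lemma pu_le {ξ : ℝ} (h : 0 ≤ ξ) (r : ℕ) : pu ξ r ≤ (ξ + 1) ^ r := by
  induction r with
  | zero => simp [pu_zero]
  | succ r ih =>
    have h0 : (0:ℝ) < r + 1 := by positivity
    have h1 := pu_succ ξ r
    have h2 := pu_nonneg h r
    refine le_of_mul_le_mul_left (h1.le.trans ?_) h0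
    rw [pow_succ]
    calc (ξ + r) * pu ξ r ≤ ((r + 1) * (ξ + 1)) * pu ξ r := by
          gcongr
          have : (0:ℝ) ≤ r := by positivity
          nlinarith
      _ ≤ ((r + 1) * (ξ + 1)) * (ξ + 1) ^ r := by gcongr
      _ = _ := by ring

lemma gamma_lower {R x : ℝ} (hR : 0 < R) (hx : 1 ≤ x) :
    Real.exp (-R) * R ^ (x - 1) ≤ Real.Gamma x := by
  have hx0 : 0 < x := by linarith
  rw [Real.Gamma_eq_integral hx0]
  have hi := Real.GammaIntegral_convergent hx0
  have hsub : Set.Ioi R ⊆ Set.Ioi 0 := Set.Ioi_subset_Ioi hR.le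
  have h2 : ∫ u in Set.Ioi R, Real.exp (-u) * R ^ (x-1) = Real.exp (-R) * R ^ (x - 1) := by
    rw [MeasureTheory.integral_mul_const, integral_exp_neg_Ioi]
  rw [← h2]
  calc _ ≤ ∫ u in Set.Ioi R, Real.exp (-u) * u ^ (x-1) := by
        refine setIntegral_mono_on ?_ (hi.mono_set hsub) measurableSet_Ioi ?_
        · exact (integrableOn_exp_neg_Ioi R).mul_const _
        · intro u hu
          have : R < u := hu
          have h3 : R ^ (x-1) ≤ u ^ (x-1) := Real.rpow_le_rpow hR.le this.le (by linarith)
          gcongr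
    _ ≤ _ := by
        refine setIntegral_mono_set hi ?_ hsub.eventuallyLE
        refine (ae_restrict_iff' measurableSet_Ioi).2 (ae_of_all _ fun u hu => ?_)
        have : (0:ℝ) < u := hu
        show 0 ≤ _
        positivity

lemma ml_summable {ν a ξ : ℝ} (hν : 0 < ν) (ha : 0 < a) (hξ : 0 ≤ ξ) (z : ℝ) :
    Summable fun r : ℕ => pu ξ r * z ^ r / Real.Gamma (ν * r + a) := by
  obtain ⟨R, hR1, hR2⟩ : ∃ R : ℝ, 0 < R ∧ 2 * (ξ + 1) * |z| ≤ R ^ ν := by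
    have h := (tendsto_rpow_atTop hν).eventually_ge_atTop (2 * (ξ + 1) * |z|)
    obtain ⟨R, h1, h2⟩ := (h.and (Filter.eventually_gt_atTop 0)).exists
    exact ⟨R, h2, h1⟩
  have hlarge : ∀ᶠ r : ℕ in Filter.atTop, 1 ≤ ν * r + a := by
    have : Filter.Tendsto (fun r : ℕ => ν * (r:ℝ) + a) Filter.atTop Filter.atTop :=
      Filter.tendsto_atTop_add_const_right _ _ (tendsto_natCast_atTop_atTop.const_mul_atTop hν)
    exact this.eventually_ge_atTop 1
  set C := (Real.exp (-R) * R ^ (a - 1))⁻¹ with hC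
  have hCpos : 0 < C := by positivity
  refine Summable.of_norm_bounded_eventually_nat (g := fun r => C * (1/2)^r)
    ((summable_geometric_of_lt_one (by norm_num) (by norm_num)).mul_left C) ?_
  filter_upwards [hlarge] with r hr
  have hG := gamma_lower hR1 hr
  have hGp : 0 < Real.Gamma (ν * r + a) := Real.Gamma_pos_of_pos (by linarith)
  rw [norm_div, norm_mul, norm_pow, Real.norm_eq_abs, Real.norm_eq_abs, Real.norm_eq_abs,
    abs_of_nonneg (pu_nonneg hξ r), abs_of_pos hGp, div_le_iff₀ hGp]
  have hpow : R ^ (ν * r + a - 1) = (R ^ ν) ^ r * R ^ (a - 1) := by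
    rw [← Real.rpow_natCast, ← Real.rpow_mul hR1.le, ← Real.rpow_add hR1]; ring_nf
  calc pu ξ r * |z| ^ r ≤ (ξ + 1) ^ r * |z| ^ r := by
        gcongr; exact pu_le hξ r
    _ = (1/2) ^ r * (2 * (ξ + 1) * |z|) ^ r := by
        rw [← mul_pow, ← mul_pow]; congr 1; ring
    _ ≤ (1/2) ^ r * (R ^ ν) ^ r := by gcongr
    _ = C * (1/2)^r * (Real.exp (-R) * R ^ (ν * r + a - 1)) := by
        rw [hpow, hC]
        have : R ^ (a-1) ≠ 0 := by positivity
        field_simp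
    _ ≤ _ := by gcongr

noncomputable def T (ν ξ a c : ℝ) (r : ℕ) (x : ℝ) : ℝ :=
  pu ξ r * c ^ r / Real.Gamma (ν * r + a) * x ^ (ν * r + a - 1)

lemma T_eq {ν ξ a c x : ℝ} (hx : 0 < x) (r : ℕ) :
    T ν ξ a c r x = x ^ (a - 1) * (pu ξ r * (c * x ^ ν) ^ r / Real.Gamma (ν * r + a)) := by
  have hpow : x ^ (ν * r + a - 1) = (x ^ ν) ^ r * x ^ (a - 1) := by
    rw [← Real.rpow_natCast, ← Real.rpow_mul hx.le, ← Real.rpow_add hx]; ring_nf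
  rw [T, hpow, mul_pow]; ring

lemma T_hasSum {ν ξ a x : ℝ} (hν : 0 < ν) (ha : 0 < a) (hξ : 0 ≤ ξ) (c : ℝ) (hx : 0 < x) :
    HasSum (fun r => T ν ξ a c r x) (x ^ (a - 1) * ML3 ν a ξ (c * x ^ ν)) := by
  simp only [T_eq hx]
  apply HasSum.mul_left
  have := (ml_summable hν ha hξ (c * x ^ ν)).hasSum
  convert! this using 1
  unfold ML3 pu
  congr 1; ext r
  rw [div_mul_eq_mul_div, div_div]

lemma T_norm {ν ξ a x : ℝ} (hν : 0 < ν) (ha : 0 < a) (hξ : 0 ≤ ξ) (c : ℝ) (hx : 0 < x) (r : ℕ) :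
    ‖T ν ξ a c r x‖ = T ν ξ a |c| r x := by
  have hGp : 0 < Real.Gamma (ν * r + a) := Real.Gamma_pos_of_pos (by positivity)
  unfold T
  rw [norm_mul, norm_div, norm_mul, norm_pow, Real.norm_eq_abs, Real.norm_eq_abs, Real.norm_eq_abs,
    Real.norm_eq_abs, abs_of_nonneg (pu_nonneg hξ r), abs_of_pos hGp, abs_of_pos (Real.rpow_pos_of_pos hx _)]

lemma beta_int_s9 {a b t : ℝ} (ha : 0 < a) (hb : 0 < b) (ht : 0 < t) :
    ∫ w in Set.Ioo 0 t, (t - w) ^ (a - 1) * w ^ (b - 1) =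
      t ^ (a + b - 1) * (Real.Gamma a * Real.Gamma b / Real.Gamma (a + b)) := by
  have h := Complex.betaIntegral_scaled (b:ℂ) (a:ℂ) ht
  rw [Complex.betaIntegral_eq_Gamma_mul_div _ _ (by simpa) (by simpa),
    intervalIntegral.integral_of_le ht.le, integral_Ioc_eq_integral_Ioo] at h
  have h2 : ∫ x in Set.Ioo 0 t, (x:ℂ) ^ ((b:ℂ) - 1) * ((t:ℂ) - x) ^ ((a:ℂ) - 1)
      = ∫ x in Set.Ioo 0 t, (((t - x) ^ (a - 1) * x ^ (b - 1) : ℝ) : ℂ) := by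
    refine setIntegral_congr_fun measurableSet_Ioo fun x hx => ?_
    have h3 : 0 ≤ t - x := by linarith [hx.2]
    simp only [Complex.ofReal_mul]
    rw [Complex.ofReal_cpow h3, Complex.ofReal_cpow hx.1.le]
    push_cast
    ring
  rw [h2, integral_complex_ofReal] at h
  apply Complex.ofReal_injective
  rw [h]
  push_cast
  rw [Complex.ofReal_cpow ht.le, ← Complex.Gamma_ofReal, ← Complex.Gamma_ofReal, ← Complex.Gamma_ofReal]
  push_cast
  rw [add_comm (b:ℂ) a, mul_comm (Complex.Gamma b)]

lemma beta_integrable {a b t : ℝ} (ha : 0 < a) (hb : 0 < b) (ht : 0 < t) :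
    IntegrableOn (fun w => (t - w) ^ (a - 1) * w ^ (b - 1)) (Set.Ioo 0 t) := by
  by_contra h
  have h1 := beta_int_s9 ha hb ht
  rw [integral_undef h] at h1
  have h2 := Real.Gamma_pos_of_pos ha
  have h3 := Real.Gamma_pos_of_pos hb
  have h4 := Real.Gamma_pos_of_pos (add_pos ha hb)
  have : 0 < t ^ (a + b - 1) * (Real.Gamma a * Real.Gamma b / Real.Gamma (a + b)) := by positivity
  linarith

lemma integrable_of_hasSum {ι : Type*} [Countable ι] {μ : Measure ℝ} {F : ι → ℝ → ℝ} {f : ℝ → ℝ}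
    (hF : ∀ i, Integrable (F i) μ) (hs : Summable fun i => ∫ a, ‖F i a‖ ∂μ)
    (hf : ∀ᵐ a ∂μ, HasSum (fun i => F i a) (f a)) : Integrable f μ := by
  have hm : AEStronglyMeasurable f μ := by
    refine aestronglyMeasurable_of_tendsto_ae (u := Filter.atTop)
      (f := fun (s : Finset ι) a => ∑ i ∈ s, F i a) ?_ hf
    intro s
    exact (integrable_finsetSum s fun i _ => hF i).aestronglyMeasurable
  refine ⟨hm, ?_⟩
  unfold HasFiniteIntegral
  calc ∫⁻ a, ‖f a‖ₑ ∂μ ≤ ∫⁻ a, ∑' i, ‖F i a‖ₑ ∂μ := by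
        refine lintegral_mono_ae ?_
        filter_upwards [hf] with a ha
        rw [← ha.tsum_eq]
        exact enorm_tsum_le_tsum_enorm
    _ = ∑' i, ∫⁻ a, ‖F i a‖ₑ ∂μ := lintegral_tsum fun i => (hF i).aestronglyMeasurable.enorm
    _ = ∑' i, ENNReal.ofReal (∫ a, ‖F i a‖ ∂μ) := by
        congr 1; ext i
        rw [ofReal_integral_norm_eq_lintegral_enorm (hF i)]
    _ < ⊤ := by
        rw [← ENNReal.ofReal_tsum_of_nonneg (fun i => integral_nonneg fun _ => norm_nonneg _) hs]
        exact ENNReal.ofReal_lt_top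

noncomputable def V (ν ξ η d c t : ℝ) (p : ℕ × ℕ) : ℝ :=
  pu ξ p.1 * pu η p.2 * c ^ (p.1 + p.2) / Real.Gamma (ν * (p.1 + p.2 : ℕ) + d) *
    t ^ (ν * (p.1 + p.2 : ℕ) + d - 1)

lemma V_sum (ν ξ η d c t : ℝ) (n : ℕ) :
    ∑ p ∈ Finset.HasAntidiagonal.antidiagonal n, V ν ξ η d c t p = T ν (ξ + η) d c n t := by
  unfold T
  rw [← pu_vandermonde, Finset.sum_mul, Finset.sum_div, Finset.sum_mul]
  refine Finset.sum_congr rfl fun p hp => ?_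
  rw [V, Finset.HasAntidiagonal.mem_antidiagonal.1 hp]

lemma V_norm {ν ξ η d t : ℝ} (hν : 0 < ν) (hd : 0 < d) (hξ : 0 ≤ ξ) (hη : 0 ≤ η)
    (ht : 0 < t) (c : ℝ) (p : ℕ × ℕ) : ‖V ν ξ η d c t p‖ = V ν ξ η d |c| t p := by
  have hGp : 0 < Real.Gamma (ν * (p.1 + p.2 : ℕ) + d) := Real.Gamma_pos_of_pos (by positivity)
  have h1 := pu_nonneg hξ p.1
  have h2 := pu_nonneg hη p.2
  have h3 : 0 < t ^ (ν * (p.1 + p.2 : ℕ) + d - 1) := by positivity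
  unfold V
  rw [norm_mul, norm_div, norm_mul, norm_pow, Real.norm_of_nonneg (mul_nonneg h1 h2),
    Real.norm_of_nonneg hGp.le, Real.norm_of_nonneg h3.le, Real.norm_eq_abs]

lemma V_summable_abs {ν ξ η d t : ℝ} (hν : 0 < ν) (hd : 0 < d) (hξ : 0 ≤ ξ) (hη : 0 ≤ η)
    (ht : 0 < t) (c : ℝ) : Summable (V ν ξ η d |c| t) := by
  have hnn : ∀ p, 0 ≤ V ν ξ η d |c| t p := fun p => by
    rw [← V_norm hν hd hξ hη ht]; exact norm_nonneg _
  rw [← Finset.HasAntidiagonal.sigmaAntidiagonalEquivProd.summable_iff]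
  refine (summable_sigma_of_nonneg (fun p => hnn _)).2 ⟨fun n => (hasSum_fintype _).summable, ?_⟩
  have := (T_hasSum hν hd (add_nonneg hξ hη) |c| ht).summable
  convert! this using 2 with n
  rw [← V_sum, tsum_fintype]
  exact Finset.sum_coe_sort (Finset.HasAntidiagonal.antidiagonal n) (V ν ξ η d |c| t)

lemma V_hasSum {ν ξ η d t : ℝ} (hν : 0 < ν) (hd : 0 < d) (hξ : 0 ≤ ξ) (hη : 0 ≤ η)
    (ht : 0 < t) (c : ℝ) :
    ∑' p, V ν ξ η d c t p = t ^ (d - 1) * ML3 ν d (ξ + η) (c * t ^ ν) := by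
  have hs : Summable (V ν ξ η d c t) := by
    apply Summable.of_norm
    simp only [V_norm hν hd hξ hη ht]
    exact V_summable_abs hν hd hξ hη ht c
  rw [← (T_hasSum hν hd (add_nonneg hξ hη) c ht).tsum_eq]
  rw [← Finset.HasAntidiagonal.sigmaAntidiagonalEquivProd.tsum_eq]
  have hs' := Finset.HasAntidiagonal.sigmaAntidiagonalEquivProd.summable_iff.2 hs
  refine (Summable.tsum_sigma' (fun n => (hasSum_fintype _).summable) hs').trans ?_
  congr 1; ext n
  rw [← V_sum, tsum_fintype]
  exact Finset.sum_coe_sort (Finset.HasAntidiagonal.antidiagonal n) (V ν ξ η d c t)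

lemma TT_integral {ν a b ξ η t : ℝ} (hν : 0 < ν) (ha : 0 < a) (hb : 0 < b) (ht : 0 < t) (c : ℝ)
    (p : ℕ × ℕ) :
    IntegrableOn (fun w => T ν ξ a c p.1 (t - w) * T ν η b c p.2 w) (Set.Ioo 0 t) ∧
    ∫ w in Set.Ioo 0 t, T ν ξ a c p.1 (t - w) * T ν η b c p.2 w = V ν ξ η (a + b) c t p := by
  have ha' : 0 < ν * p.1 + a := by positivity
  have hb' : 0 < ν * p.2 + b := by positivity
  have h1 := Real.Gamma_pos_of_pos ha'
  have h2 := Real.Gamma_pos_of_pos hb'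
  have e : (fun w => T ν ξ a c p.1 (t - w) * T ν η b c p.2 w) = fun w =>
      (pu ξ p.1 * c ^ p.1 / Real.Gamma (ν * p.1 + a) * (pu η p.2 * c ^ p.2 / Real.Gamma (ν * p.2 + b)))
        * ((t - w) ^ (ν * p.1 + a - 1) * w ^ (ν * p.2 + b - 1)) := by
    ext w; unfold T; ring
  rw [e]
  refine ⟨(beta_integrable ha' hb' ht).const_mul _, ?_⟩
  rw [MeasureTheory.integral_const_mul, beta_int_s9 ha' hb' ht, V]
  have e2 : ν * p.1 + a + (ν * p.2 + b) = ν * (p.1 + p.2 : ℕ) + (a + b) := by push_cast; ring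
  rw [e2, pow_add]
  field_simp

lemma hasSum_prod_aux {f g : ℕ → ℝ} {x y : ℝ} (hf : HasSum f x) (hg : HasSum g y) :
    HasSum (fun p : ℕ × ℕ => f p.1 * g p.2) (x * y) := by
  have C : Summable (fun p : ℕ × ℕ => f p.1 * g p.2) :=
    summable_mul_of_summable_norm hf.summable.norm hg.summable.norm
  have h := hf.summable.tsum_mul_tsum hg.summable C
  rw [hf.tsum_eq, hg.tsum_eq] at h
  rw [h]
  exact C.hasSum

lemma conv_main {ν a b ξ η t : ℝ} (hν : 0 < ν) (ha : 0 < a) (hb : 0 < b) (hξ : 0 ≤ ξ) (hη : 0 ≤ η)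
    (ht : 0 < t) (c : ℝ) :
    IntegrableOn (fun w => ((t - w) ^ (a - 1) * ML3 ν a ξ (c * (t - w) ^ ν)) *
      (w ^ (b - 1) * ML3 ν b η (c * w ^ ν))) (Set.Ioo 0 t) ∧
    ∫ w in Set.Ioo 0 t, ((t - w) ^ (a - 1) * ML3 ν a ξ (c * (t - w) ^ ν)) *
      (w ^ (b - 1) * ML3 ν b η (c * w ^ ν)) =
      t ^ (a + b - 1) * ML3 ν (a + b) (ξ + η) (c * t ^ ν) := by
  set F : ℕ × ℕ → ℝ → ℝ := fun p w => T ν ξ a c p.1 (t - w) * T ν η b c p.2 w with hFdef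
  have hF : ∀ p, Integrable (F p) (volume.restrict (Set.Ioo 0 t)) :=
    fun p => (TT_integral hν ha hb ht c p).1
  have hs : Summable fun p => ∫ w in Set.Ioo 0 t, ‖F p w‖ := by
    have := V_summable_abs hν (add_pos ha hb) hξ hη ht c
    convert! this using 2 with p
    rw [← (TT_integral hν ha hb ht |c| p).2]
    refine setIntegral_congr_fun measurableSet_Ioo fun w hw => ?_
    simp only [hFdef]
    rw [norm_mul, T_norm hν ha hξ c (sub_pos.2 hw.2), T_norm hν hb hη c hw.1]
  have hpt : ∀ w ∈ Set.Ioo 0 t, HasSum (fun p => F p w)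
      (((t - w) ^ (a - 1) * ML3 ν a ξ (c * (t - w) ^ ν)) * (w ^ (b - 1) * ML3 ν b η (c * w ^ ν))) := by
    intro w hw
    have A := T_hasSum hν ha hξ c (sub_pos.2 hw.2)
    have B := T_hasSum hν hb hη c hw.1
    have D := hasSum_prod_aux A B
    simpa only [hFdef] using D
  have hae := (ae_restrict_iff' (μ := volume) measurableSet_Ioo).2 (ae_of_all _ hpt)
  refine ⟨integrable_of_hasSum hF hs hae, ?_⟩
  rw [← V_hasSum hν (add_pos ha hb) hξ hη ht c]
  have := integral_tsum_of_summable_integral_norm hF hs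
  rw [setIntegral_congr_fun measurableSet_Ioo (fun w hw => (hpt w hw).tsum_eq.symm), ← this]
  congr 1; ext p
  exact (TT_integral hν ha hb ht c p).2.symm ▸ rfl

theorem stmt9 (lam ν δ t : ℝ) (k : ℕ) (hk : 1 ≤ k) (hlam : 0 < lam)
    (hν : ν ∈ Set.Ioc (0 : ℝ) 1) (hδ : 0 < δ) (ht : 0 < t) :
    pstate lam ν δ k t =
      lam ^ δ * ∫ w in (0 : ℝ)..t,
        (t - w) ^ (ν * δ - 1) * ML3 ν (ν * δ) δ (-(lam * (t - w) ^ ν)) *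
          pstate lam ν δ (k - 1) w := by
  obtain ⟨m, rfl⟩ : ∃ m, k = m + 1 := ⟨k - 1, by omega⟩
  have hν0 := hν.1
  have key : ∀ j : ℕ, _ := fun j => conv_main (a := ν * δ) (b := ν * δ * j + 1) (ξ := δ) (η := δ * j)
    hν0 (by positivity) (by positivity) hδ.le (by positivity) ht (-lam)
  obtain ⟨i1, e1⟩ := key m
  obtain ⟨i2, e2⟩ := key (m + 1)
  have hsub := MeasureTheory.integral_sub (i1.const_mul (lam ^ (δ * m))) (i2.const_mul (lam ^ (δ * (m + 1))))
  rw [MeasureTheory.integral_const_mul, MeasureTheory.integral_const_mul, e1, e2] at hsub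
  rw [intervalIntegral.integral_of_le ht.le, integral_Ioc_eq_integral_Ioo]
  have hI : ∫ w in Set.Ioo 0 t, (t - w) ^ (ν * δ - 1) * ML3 ν (ν * δ) δ (-(lam * (t - w) ^ ν)) *
          pstate lam ν δ (m + 1 - 1) w = _ := Eq.trans ?_ hsub
  · rw [hI, mul_sub, ← mul_assoc, ← mul_assoc, ← mul_assoc, ← mul_assoc, ← Real.rpow_add hlam,
      ← Real.rpow_add hlam, pstate]
    push_cast
    simp only [neg_mul]
    ring_nf
  · congr 1; ext w
    rw [Nat.add_sub_cancel, pstate]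
    push_cast
    simp only [neg_mul, add_sub_cancel_right]
    ring
end
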